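/- For q a prime power, the graph Γ_q is a (q+1)-regular bipartite graph of girth 8 on 2q^3 + 2q^2 + 2q + 2 vertices; hence it is a (q+1,8)-cage. -/

import Mathlib

/-- One side of the bipartition of `Γ_q`: ordinary vertices `(a,b,c)` with
`a ∈ F ∪ {q}` (encoded as `Option F`, `none` being the extra symbol `q`) and
`b, c ∈ F`, together with the special vertices `(q,q,a)` with `a ∈ F ∪ {q}`. -/
abbrev SGam (F : Type*) := (Option F × F × F) ⊕ Option F

/-- The incidence relation of `Γ_q`: `lineAdj l p` says the line `l ∈ V₁` is
incident with the point `p ∈ V₀`, following the explicit formula of Definition 1. -/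
def lineAdj {F : Type*} [Field F] : SGam F → SGam F → Prop
  | Sum.inl (some a, b, c), Sum.inl (some x, y, z) =>
      y = a * x + b ∧ z = a ^ 2 * x + 2 * a * b + c
  | Sum.inl (some a, _, c), Sum.inl (none, y, z) => y = a ∧ z = c
  | Sum.inl (none, b, c), Sum.inl (some x, y, _) => x = c ∧ y = b
  | Sum.inl (none, _, c), Sum.inr (some z) => z = c
  | Sum.inr (some a), Sum.inl (none, y, _) => y = a
  | Sum.inr (some _), Sum.inr none => True
  | Sum.inr none, Sum.inr _ => True
  | _, _ => False

/-- The bipartite graph `Γ_q`: `Sum.inl` is the point side `V₀`, `Sum.inr` is the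
line side `V₁`, and a point is adjacent to a line iff they are incident. -/
def GammaQ (F : Type*) [Field F] : SimpleGraph (SGam F ⊕ SGam F) :=
  SimpleGraph.fromRel (fun u v =>
    match u, v with
    | Sum.inl p, Sum.inr l => lineAdj l p
    | _, _ => False)

/-- The point `(a,b,c)₀`, `a ∈ F ∪ {q}`. -/
def pt {F : Type*} (a : Option F) (b c : F) : SGam F ⊕ SGam F := Sum.inl (Sum.inl (a, b, c))
/-- The point `(q,q,a)₀`, `a ∈ F ∪ {q}`. -/
def ptq {F : Type*} (a : Option F) : SGam F ⊕ SGam F := Sum.inl (Sum.inr a)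
/-- The line `(a,b,c)₁`, `a ∈ F ∪ {q}`. -/
def ln {F : Type*} (a : Option F) (b c : F) : SGam F ⊕ SGam F := Sum.inr (Sum.inl (a, b, c))
/-- The line `(q,q,a)₁`, `a ∈ F ∪ {q}`. -/
def lnq {F : Type*} (a : Option F) : SGam F ⊕ SGam F := Sum.inr (Sum.inr a)

/-
The graph `Γ_q` is the incidence graph of Tits' generalized quadrangle `T₂(O)`, where `O` is the
conic `{(1, a, a²)} ∪ {(0, 0, 1)}` in the plane at infinity of the affine space `F³`. The line
`(t, b, c)` is an affine line whose direction is the point `t` of the conic, and the line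
`(q, q, t)` is the point `t` itself. The point `(x, y, z)` with `x ∈ F` is an affine point,
`(q, a, k)` and `(q, q, k)` are the affine planes containing the tangent line of the conic at `a`
and at `q`, and `(q, q, q)` is incident with all points of the conic. The linear form defining the
planes through two points `s`, `t` of the conic (through the tangent line if `s = t`) vanishes at no
third point of the conic, and this rules out two lines with two common points and triangles of
lines, that is, cycles of length `4` and `6`.
-/

theorem eight_le_egirth_of_isBipartite {V : Type*} {G : SimpleGraph V} (hG : G.IsBipartite)
    (path_two_unique : ∀ ⦃s t u v⦄, G.Adj s t → G.Adj t u → G.Adj s v → G.Adj v u →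
      s ≠ u → t = v)
    (path_three_unique : ∀ ⦃s t u v w x⦄, G.Adj s t → G.Adj t u → G.Adj u v →
      G.Adj s x → G.Adj x w → G.Adj w v → ¬ G.Adj s v → t = x) :
    8 ≤ G.egirth := by
  rw [SimpleGraph.le_egirth]
  intro s p hp
  by_contra! hlt
  replace hlt : p.length < 8 := by exact_mod_cast hlt
  have hnodup := hp.support_nodup
  have hthree := hp.three_le_length
  have heven : Even p.length := SimpleGraph.two_colorable_iff_forall_loop_even.mp hG s p
  clear hp
  rcases p with
    _ | ⟨h₁, _ | ⟨h₂, _ | ⟨h₃, _ | ⟨h₄, _ | ⟨h₅, _ | ⟨h₆, _ | ⟨h₇, _ | ⟨h₈, p⟩⟩⟩⟩⟩⟩⟩⟩ <;>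
    simp only [SimpleGraph.Walk.length_cons, SimpleGraph.Walk.length_nil, Nat.even_iff]
      at hthree hlt heven <;>
    try omega
  · rename_i t u v
    have hsu : s ≠ u := by rintro rfl; simp at hnodup
    obtain rfl : t = v := path_two_unique h₁ h₂ h₄.symm h₃.symm hsu
    simp at hnodup
  · rename_i t u v w x
    have hchord : ¬ G.Adj s v := by
      intro hsv
      have hsu : s ≠ u := by rintro rfl; simp at hnodup
      obtain rfl : t = v := path_two_unique h₁ h₂ hsv h₃.symm hsu
      simp at hnodup
    obtain rfl : t = x := path_three_unique h₁ h₂ h₃ h₆.symm h₅.symm h₄.symm hchord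
    simp at hnodup

theorem ncard_range_option {α β : Type*} [Fintype α] {f : Option α → β}
    (hf : Function.Injective f) : (Set.range f).ncard = Fintype.card α + 1 := by
  rw [Set.ncard_range_of_injective hf, Nat.card_eq_fintype_card, Fintype.card_option]

theorem ncard_insert_range {α β : Type*} [Fintype α] {f : α → β}
    (hf : Function.Injective f) {b : β} (hb : b ∉ Set.range f) :
    (insert b (Set.range f)).ncard = Fintype.card α + 1 := by
  rw [Set.ncard_insert_of_notMem hb (Set.finite_range f), Set.ncard_range_of_injective hf,
    Nat.card_eq_fintype_card]

namespace GammaQ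

section Points

variable {F : Type*}

/-- The affine point `v` of `T₂(O)`. -/
def affinePoint (v : F × F × F) : SGam F := Sum.inl (some v.1, v.2)

/-- The point of `T₂(O)` that is an affine plane containing the tangent line of the conic at `t`;
the plane is the fibre over `k` of the linear form `secantForm t t` below. -/
def tangentPlane : Option F → F → SGam F
  | some a, k => Sum.inl (none, a, k)
  | none, k => Sum.inr (some k)

/-- The point `(∞)` of `T₂(O)`, incident with the points of the conic only. -/
def apex : SGam F := Sum.inr none

theorem point_cases (p : SGam F) :
    (∃ v, p = affinePoint v) ∨ (∃ t k, p = tangentPlane t k) ∨ p = apex := by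
  rcases p with ⟨_ | x, y, z⟩ | _ | k
  · exact .inr (.inl ⟨some y, z, rfl⟩)
  · exact .inl ⟨(x, y, z), rfl⟩
  · exact .inr (.inr rfl)
  · exact .inr (.inl ⟨none, k, rfl⟩)

theorem affinePoint_injective : Function.Injective (affinePoint (F := F)) := by
  rintro ⟨x, y, z⟩ ⟨x', y', z'⟩ h
  simpa [affinePoint] using h

theorem tangentPlane_inj {s t : Option F} {k k' : F} :
    tangentPlane s k = tangentPlane t k' ↔ s = t ∧ k = k' := by
  rcases s with _ | a <;> rcases t with _ | b <;> simp [tangentPlane]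

theorem affinePoint_ne_tangentPlane {v : F × F × F} {t : Option F} {k : F} :
    affinePoint v ≠ tangentPlane t k := by
  rcases t with _ | a <;> simp [affinePoint, tangentPlane]

theorem affinePoint_ne_apex {v : F × F × F} : affinePoint v ≠ apex := by
  simp [affinePoint, apex]

theorem tangentPlane_ne_apex {t : Option F} {k : F} : tangentPlane t k ≠ apex := by
  rcases t with _ | a <;> simp [tangentPlane, apex]

end Points

variable {F : Type*} [Field F]

section Conic

/-- The point of the conic at infinity with parameter `t`, as a direction vector of `F³`. -/
def direction : Option F → F × F × F
  | some a => (1, a, a ^ 2)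
  | none => (0, 0, 1)

theorem direction_ne_zero (t : Option F) : direction t ≠ 0 := by
  rcases t with _ | a <;> simp [direction]

/-- The linear form on `F³` whose kernel is the plane through the points `s` and `t` of the conic,
or through the tangent line at `s` when `s = t`. -/
def secantForm (s t : Option F) : F × F × F →ₗ[F] F where
  toFun v :=
    match s, t with
    | some a, some b => v.2.2 - (a + b) * v.2.1 + a * b * v.1
    | some a, none | none, some a => v.2.1 - a * v.1
    | none, none => v.1
  map_add' v w := by
    rcases s with _ | a <;> rcases t with _ | b <;> simp only [Prod.fst_add, Prod.snd_add] <;> ring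
  map_smul' r v := by
    rcases s with _ | a <;> rcases t with _ | b <;>
      simp only [Prod.smul_fst, Prod.smul_snd, smul_eq_mul, RingHom.id_apply] <;> ring

theorem secantForm_direction_eq_zero_iff {s t u : Option F} :
    secantForm s t (direction u) = 0 ↔ u = s ∨ u = t := by
  have factor (a b c : F) : c ^ 2 - (a + b) * c + a * b = (c - a) * (c - b) := by ring
  rcases s with _ | a <;> rcases t with _ | b <;> rcases u with _ | c <;>
    simp [secantForm, direction, factor, sub_eq_zero]

end Conic

section AffineLines

/-- The pair `(b, c)` such that `(t, b, c)` is the line through `v` with direction `t`. -/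
def lineCoords (t : Option F) (v : F × F × F) : F × F :=
  (t.elim v.2.1 fun a => v.2.1 - a * v.1, secantForm t t v)

/-- A chosen point of the line `(t, b, c)`, where `m = (b, c)`. -/
def basePoint (t : Option F) (m : F × F) : F × F × F :=
  t.elim (m.2, m.1, 0) fun a => (0, m.1, 2 * a * m.1 + m.2)

theorem lineCoords_basePoint (t : Option F) (m : F × F) : lineCoords t (basePoint t m) = m := by
  rcases t with _ | a
  · simp [lineCoords, basePoint, secantForm]
  · simp [lineCoords, basePoint, secantForm, two_mul]

theorem lineCoords_eq_iff {t : Option F} {v w : F × F × F} :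
    lineCoords t v = lineCoords t w ↔ ∃ r : F, v = w + r • direction t := by
  constructor
  · obtain ⟨x, y, z⟩ := v
    obtain ⟨x', y', z'⟩ := w
    intro h
    rcases t with _ | a
    · obtain ⟨hy, hx⟩ : y = y' ∧ x = x' := by simpa [lineCoords, secantForm] using h
      exact ⟨z - z', by simp [direction, hx, hy]⟩
    · obtain ⟨hy, hz⟩ : y - a * x = y' - a * x' ∧
          z - (a + a) * y + a * a * x = z' - (a + a) * y' + a * a * x' := by
        simpa [lineCoords, secantForm] using h
      refine ⟨x - x', Prod.ext ?_ (Prod.ext ?_ ?_)⟩ <;>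
        simp only [direction, Prod.fst_add, Prod.snd_add, Prod.smul_fst, Prod.smul_snd, smul_eq_mul]
      · ring
      · linear_combination hy
      · linear_combination hz + 2 * a * hy
  · rintro ⟨r, rfl⟩
    have hform : secantForm t t (direction t) = 0 :=
      secantForm_direction_eq_zero_iff.mpr (.inl rfl)
    rcases t with _ | a
    · simp [lineCoords, direction, secantForm]
    · simp only [lineCoords, map_add, map_smul, hform, smul_zero, add_zero, Prod.mk.injEq, and_true]
      simp only [Option.elim, direction, Prod.fst_add, Prod.snd_add, Prod.smul_fst, Prod.smul_snd,
        smul_eq_mul]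
      ring

theorem secantForm_eq_of_lineCoords_eq {s t u : Option F} (hu : u = s ∨ u = t) {v w : F × F × F}
    (hline : lineCoords u v = lineCoords u w) : secantForm s t v = secantForm s t w := by
  obtain ⟨r, rfl⟩ := lineCoords_eq_iff.mp hline
  simp [secantForm_direction_eq_zero_iff.mpr hu]

theorem eq_of_lineCoords_eq_of_secantForm_eq {s t u : Option F} {v w : F × F × F}
    (hs : u ≠ s) (ht : u ≠ t) (hline : lineCoords u v = lineCoords u w)
    (hplane : secantForm s t v = secantForm s t w) : v = w := by
  obtain ⟨r, rfl⟩ := lineCoords_eq_iff.mp hline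
  have hr : r * secantForm s t (direction u) = 0 := by simpa using hplane
  have hu : secantForm s t (direction u) ≠ 0 := by
    simp [secantForm_direction_eq_zero_iff, hs, ht]
  simp [(mul_eq_zero.mp hr).resolve_right hu]

end AffineLines

section Incidence

variable {s t : Option F} {m : F × F} {v : F × F × F} {k : F} {l p : SGam F}

@[simp]
theorem lineAdj_inl_affinePoint :
    lineAdj (Sum.inl (t, m)) (affinePoint v) ↔ lineCoords t v = m := by
  obtain ⟨b, c⟩ := m
  obtain ⟨x, y, z⟩ := v
  rcases t with _ | a
  · simp [lineAdj, affinePoint, lineCoords, secantForm, and_comm]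
  · simp only [lineAdj, affinePoint, lineCoords, secantForm, Option.elim, LinearMap.coe_mk,
      AddHom.coe_mk, Prod.mk.injEq]
    grind

@[simp]
theorem lineAdj_inl_tangentPlane :
    lineAdj (Sum.inl (t, m)) (tangentPlane s k) ↔ s = t ∧ k = m.2 := by
  rcases s with _ | a <;> rcases t with _ | b <;> simp [lineAdj, tangentPlane]

@[simp]
theorem not_lineAdj_inl_apex : ¬ lineAdj (Sum.inl (t, m)) apex := by
  rcases t with _ | _ <;> simp [lineAdj, apex]

@[simp]
theorem not_lineAdj_inr_affinePoint : ¬ lineAdj (Sum.inr t) (affinePoint v) := by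
  rcases t with _ | _ <;> simp [lineAdj, affinePoint]

@[simp]
theorem lineAdj_inr_tangentPlane : lineAdj (Sum.inr t) (tangentPlane s k) ↔ s = t := by
  rcases s with _ | a <;> rcases t with _ | b <;> simp [lineAdj, tangentPlane]

@[simp]
theorem lineAdj_inr_apex : lineAdj (Sum.inr t) apex := by
  rcases t with _ | _ <;> simp [lineAdj, apex]

theorem lineAdj_affinePoint_iff :
    lineAdj l (affinePoint v) ↔ ∃ t, Sum.inl (t, lineCoords t v) = l := by
  rcases l with ⟨t, m⟩ | t <;> simp

theorem lineAdj_tangentPlane_iff :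
    lineAdj l (tangentPlane t k) ↔ l = Sum.inr t ∨ ∃ b, Sum.inl (t, b, k) = l := by
  rcases l with ⟨s, b, c⟩ | s <;> simp [eq_comm]

theorem lineAdj_apex_iff : lineAdj l apex ↔ ∃ t, Sum.inr t = l := by
  rcases l with ⟨t, m⟩ | t <;> simp

theorem lineAdj_inl_iff :
    lineAdj (Sum.inl (t, m)) p ↔
      p = tangentPlane t m.2 ∨ ∃ r : F, affinePoint (basePoint t m + r • direction t) = p := by
  obtain ⟨v, rfl⟩ | ⟨s, k, rfl⟩ | rfl := point_cases p
  · nth_rw 1 [lineAdj_inl_affinePoint, ← lineCoords_basePoint t m, lineCoords_eq_iff]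
    simp [affinePoint_injective.eq_iff, affinePoint_ne_tangentPlane, eq_comm]
  · simp [tangentPlane_inj, affinePoint_ne_tangentPlane]
  · simp [affinePoint_ne_apex, tangentPlane_ne_apex.symm]

theorem lineAdj_inr_iff : lineAdj (Sum.inr t) p ↔ p = apex ∨ ∃ k, tangentPlane t k = p := by
  obtain ⟨v, rfl⟩ | ⟨s, k, rfl⟩ | rfl := point_cases p
  · simp [affinePoint_ne_apex, affinePoint_ne_tangentPlane.symm]
  · simp [tangentPlane_inj, tangentPlane_ne_apex, eq_comm (a := s)]
  · simp

end Incidence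

section Regularity

variable [Fintype F]

theorem ncard_setOf_lineAdj_left (p : SGam F) :
    {l | lineAdj l p}.ncard = Fintype.card F + 1 := by
  obtain ⟨v, rfl⟩ | ⟨t, k, rfl⟩ | rfl := point_cases p
  · have hlines : {l | lineAdj l (affinePoint v)} =
        Set.range fun t => Sum.inl (t, lineCoords t v) :=
      Set.ext fun _ => lineAdj_affinePoint_iff
    rw [hlines, ncard_range_option fun t t' h => congrArg Prod.fst (Sum.inl_injective h)]
  · have hlines : {l | lineAdj l (tangentPlane t k)} =
        insert (Sum.inr t) (Set.range fun b => Sum.inl (t, b, k)) :=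
      Set.ext fun _ => lineAdj_tangentPlane_iff
    rw [hlines, ncard_insert_range (fun b b' h => by simpa using h) (by simp)]
  · have hlines : {l : SGam F | lineAdj l apex} = Set.range Sum.inr :=
      Set.ext fun _ => lineAdj_apex_iff
    rw [hlines, ncard_range_option Sum.inr_injective]

theorem ncard_setOf_lineAdj_right (l : SGam F) :
    {p | lineAdj l p}.ncard = Fintype.card F + 1 := by
  rcases l with ⟨t, m⟩ | t
  · have hpoints : {p | lineAdj (Sum.inl (t, m)) p} = insert (tangentPlane t m.2)
        (Set.range fun r : F => affinePoint (basePoint t m + r • direction t)) :=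
      Set.ext fun _ => lineAdj_inl_iff
    rw [hpoints, ncard_insert_range]
    · exact affinePoint_injective.comp <| (add_right_injective _).comp <|
        smul_left_injective F (direction_ne_zero t)
    · simp [affinePoint_ne_tangentPlane]
  · have hpoints : {p | lineAdj (Sum.inr t) p} = insert apex (Set.range (tangentPlane t)) :=
      Set.ext fun _ => lineAdj_inr_iff
    rw [hpoints, ncard_insert_range (fun k k' h => (tangentPlane_inj.mp h).2)
      (by simp [tangentPlane_ne_apex])]

end Regularity

section TwoCommonPoints

variable {l l' p p' : SGam F}

theorem line_eq_of_common_affinePoint {v : F × F × F} (hlv : lineAdj l (affinePoint v))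
    (hlp : lineAdj l p) (hlv' : lineAdj l' (affinePoint v)) (hlp' : lineAdj l' p)
    (hp : affinePoint v ≠ p) : l = l' := by
  obtain ⟨t, rfl⟩ := lineAdj_affinePoint_iff.mp hlv
  obtain ⟨t', rfl⟩ := lineAdj_affinePoint_iff.mp hlv'
  suffices t = t' by rw [this]
  obtain ⟨w, rfl⟩ | ⟨s, k, rfl⟩ | rfl := point_cases p
  · rw [lineAdj_inl_affinePoint] at hlp hlp'
    by_contra ht
    have hplane : secantForm t' t' v = secantForm t' t' w :=
      secantForm_eq_of_lineCoords_eq (.inl rfl) hlp'.symm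
    exact hp (congrArg affinePoint
      (eq_of_lineCoords_eq_of_secantForm_eq ht ht hlp.symm hplane))
  · rw [lineAdj_inl_tangentPlane] at hlp hlp'
    exact hlp.1.symm.trans hlp'.1
  · exact absurd hlp not_lineAdj_inl_apex

theorem line_eq_of_two_common_points (hlp : lineAdj l p) (hlp' : lineAdj l p')
    (hl'p : lineAdj l' p) (hl'p' : lineAdj l' p') (hp : p ≠ p') : l = l' := by
  obtain ⟨v, rfl⟩ | hp_ideal := point_cases p
  · exact line_eq_of_common_affinePoint hlp hlp' hl'p hl'p' hp
  obtain ⟨v, rfl⟩ | hp'_ideal := point_cases p'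
  · exact line_eq_of_common_affinePoint hlp' hlp hl'p' hl'p hp.symm
  rcases hp_ideal with ⟨s, k, rfl⟩ | rfl <;> rcases hp'_ideal with ⟨s', k', rfl⟩ | rfl <;>
    rcases l with ⟨t, m⟩ | t <;> rcases l' with ⟨t', m'⟩ | t' <;> simp_all

end TwoCommonPoints

section Concurrency

variable {s t : Option F} {m m' : F × F} {p : SGam F}

theorem direction_eq_of_lineAdj_inl_of_lineAdj_inr
    (hs : lineAdj (Sum.inl (s, m)) p) (ht : lineAdj (Sum.inr t) p) : s = t := by
  obtain ⟨v, rfl⟩ | ⟨u, k, rfl⟩ | rfl := point_cases p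
  · exact absurd ht not_lineAdj_inr_affinePoint
  · exact (lineAdj_inl_tangentPlane.mp hs).1.symm.trans (lineAdj_inr_tangentPlane.mp ht)
  · exact absurd hs not_lineAdj_inl_apex

theorem tangentPlane_eq_of_parallel (hm : lineAdj (Sum.inl (t, m)) p)
    (hm' : lineAdj (Sum.inl (t, m')) p) : m.2 = m'.2 := by
  obtain ⟨v, rfl⟩ | ⟨u, k, rfl⟩ | rfl := point_cases p
  · rw [← lineAdj_inl_affinePoint.mp hm, ← lineAdj_inl_affinePoint.mp hm']
  · exact (lineAdj_inl_tangentPlane.mp hm).2.symm.trans (lineAdj_inl_tangentPlane.mp hm').2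
  · exact absurd hm not_lineAdj_inl_apex

theorem exists_affinePoint_of_direction_ne (hst : s ≠ t) (hs : lineAdj (Sum.inl (s, m)) p)
    (ht : lineAdj (Sum.inl (t, m')) p) :
    ∃ v, p = affinePoint v ∧ lineCoords s v = m ∧ lineCoords t v = m' := by
  obtain ⟨v, rfl⟩ | ⟨u, k, rfl⟩ | rfl := point_cases p
  · exact ⟨v, rfl, lineAdj_inl_affinePoint.mp hs, lineAdj_inl_affinePoint.mp ht⟩
  · exact absurd ((lineAdj_inl_tangentPlane.mp hs).1.symm.trans
      (lineAdj_inl_tangentPlane.mp ht).1) hst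
  · exact absurd hs not_lineAdj_inl_apex

theorem secantForm_eq_of_concurrent {v w : F × F × F}
    (hs : lineAdj (Sum.inl (s, lineCoords s v)) p) (ht : lineAdj (Sum.inl (t, lineCoords t w)) p) :
    secantForm s t v = secantForm s t w := by
  rcases eq_or_ne s t with rfl | hst
  · exact tangentPlane_eq_of_parallel hs ht
  · obtain ⟨x, -, hv, hw⟩ := exists_affinePoint_of_direction_ne hst hs ht
    calc secantForm s t v = secantForm s t x :=
          secantForm_eq_of_lineCoords_eq (.inl rfl) hv.symm
      _ = secantForm s t w := secantForm_eq_of_lineCoords_eq (.inr rfl) hw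

end Concurrency

section Projection

variable {l m m' q q' : SGam F}

theorem lineCoords_eq_of_transversals {s t u : Option F} {c : F × F} {v : F × F × F}
    (hus : u ≠ s) (hut : u ≠ t)
    (hsq : lineAdj (Sum.inl (s, lineCoords s v)) q) (hlq : lineAdj (Sum.inl (t, c)) q)
    (huq' : lineAdj (Sum.inl (u, lineCoords u v)) q') (hlq' : lineAdj (Sum.inl (t, c)) q') :
    lineCoords t v = c := by
  obtain ⟨w, -, hwu, rfl⟩ := exists_affinePoint_of_direction_ne hut huq' hlq'
  have hplane : secantForm s t v = secantForm s t w := secantForm_eq_of_concurrent hsq hlq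
  rw [eq_of_lineCoords_eq_of_secantForm_eq hus hut hwu.symm hplane]

theorem line_unique_of_affinePoint {v : F × F × F} (hl : ¬ lineAdj l (affinePoint v))
    (hm : lineAdj m (affinePoint v)) (hmq : lineAdj m q) (hlq : lineAdj l q)
    (hm' : lineAdj m' (affinePoint v)) (hmq' : lineAdj m' q') (hlq' : lineAdj l q') :
    m = m' := by
  obtain ⟨s, rfl⟩ := lineAdj_affinePoint_iff.mp hm
  obtain ⟨s', rfl⟩ := lineAdj_affinePoint_iff.mp hm'
  suffices s = s' by rw [this]
  rcases l with ⟨t, c⟩ | t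
  · rw [lineAdj_inl_affinePoint] at hl
    by_contra hs
    rcases eq_or_ne s' t with rfl | hs't
    · exact hl (lineCoords_eq_of_transversals hs hs hmq' hlq' hmq hlq)
    · exact hl (lineCoords_eq_of_transversals (Ne.symm hs) hs't hmq hlq hmq' hlq')
  · exact (direction_eq_of_lineAdj_inl_of_lineAdj_inr hmq hlq).trans
      (direction_eq_of_lineAdj_inl_of_lineAdj_inr hmq' hlq').symm

theorem eq_inr_of_parallel {t : Option F} {k : F} {c : F × F} (hk : k ≠ c.2)
    (hm : lineAdj m (tangentPlane t k)) (hmq : lineAdj m q) (hlq : lineAdj (Sum.inl (t, c)) q) :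
    m = Sum.inr t := by
  obtain rfl | ⟨b, rfl⟩ := lineAdj_tangentPlane_iff.mp hm
  · rfl
  · exact absurd (tangentPlane_eq_of_parallel hmq hlq) hk

theorem exists_eq_inl_of_direction_ne {s t : Option F} {k : F} {c : F × F}
    (hst : s ≠ t) (hm : lineAdj m (tangentPlane s k)) (hmq : lineAdj m q)
    (hlq : lineAdj (Sum.inl (t, c)) q) :
    ∃ v, m = Sum.inl (s, lineCoords s v) ∧ secantForm s s v = k ∧ lineCoords t v = c := by
  obtain rfl | ⟨b, rfl⟩ := lineAdj_tangentPlane_iff.mp hm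
  · exact absurd (direction_eq_of_lineAdj_inl_of_lineAdj_inr hlq hmq).symm hst
  · obtain ⟨v, -, hv, hc⟩ := exists_affinePoint_of_direction_ne hst hmq hlq
    exact ⟨v, by rw [hv], congrArg Prod.snd hv, hc⟩

theorem eq_inr_of_lineAdj_inr {s t : Option F} {k : F} (hst : s ≠ t)
    (hm : lineAdj m (tangentPlane s k)) (hmq : lineAdj m q) (hlq : lineAdj (Sum.inr t) q) :
    m = Sum.inr s := by
  obtain rfl | ⟨b, rfl⟩ := lineAdj_tangentPlane_iff.mp hm
  · rfl
  · exact absurd (direction_eq_of_lineAdj_inl_of_lineAdj_inr hmq hlq) hst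

theorem line_unique_of_tangentPlane {s : Option F} {k : F}
    (hl : ¬ lineAdj l (tangentPlane s k))
    (hm : lineAdj m (tangentPlane s k)) (hmq : lineAdj m q) (hlq : lineAdj l q)
    (hm' : lineAdj m' (tangentPlane s k)) (hmq' : lineAdj m' q') (hlq' : lineAdj l q') :
    m = m' := by
  rcases l with ⟨t, c⟩ | t
  · rcases eq_or_ne s t with rfl | hst
    · have hk : k ≠ c.2 := by simpa using hl
      rw [eq_inr_of_parallel hk hm hmq hlq,
        eq_inr_of_parallel hk hm' hmq' hlq']
    · obtain ⟨v, rfl, hv, rfl⟩ := exists_eq_inl_of_direction_ne hst hm hmq hlq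
      obtain ⟨v', rfl, hv', hline⟩ := exists_eq_inl_of_direction_ne hst hm' hmq' hlq'
      rw [eq_of_lineCoords_eq_of_secantForm_eq hst.symm hst.symm hline (hv'.trans hv.symm)]
  · have hst : s ≠ t := by simpa using hl
    rw [eq_inr_of_lineAdj_inr hst hm hmq hlq,
      eq_inr_of_lineAdj_inr hst hm' hmq' hlq']

theorem line_unique_of_apex (hl : ¬ lineAdj l apex)
    (hm : lineAdj m apex) (hmq : lineAdj m q) (hlq : lineAdj l q)
    (hm' : lineAdj m' apex) (hmq' : lineAdj m' q') (hlq' : lineAdj l q') :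
    m = m' := by
  obtain ⟨s, rfl⟩ := lineAdj_apex_iff.mp hm
  obtain ⟨s', rfl⟩ := lineAdj_apex_iff.mp hm'
  rcases l with ⟨t, c⟩ | t
  · rw [← direction_eq_of_lineAdj_inl_of_lineAdj_inr hlq hmq,
      ← direction_eq_of_lineAdj_inl_of_lineAdj_inr hlq' hmq']
  · exact absurd lineAdj_inr_apex hl

theorem line_unique_of_not_lineAdj {p : SGam F} (hl : ¬ lineAdj l p)
    (hm : lineAdj m p) (hmq : lineAdj m q) (hlq : lineAdj l q)
    (hm' : lineAdj m' p) (hmq' : lineAdj m' q') (hlq' : lineAdj l q') : m = m' := by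
  obtain ⟨v, rfl⟩ | ⟨s, k, rfl⟩ | rfl := point_cases p
  · exact line_unique_of_affinePoint hl hm hmq hlq hm' hmq' hlq'
  · exact line_unique_of_tangentPlane hl hm hmq hlq hm' hmq' hlq'
  · exact line_unique_of_apex hl hm hmq hlq hm' hmq' hlq'

end Projection

section Graph

theorem adj_inl_iff {p : SGam F} {v : SGam F ⊕ SGam F} :
    (GammaQ F).Adj (Sum.inl p) v ↔ ∃ l, lineAdj l p ∧ Sum.inr l = v := by
  rcases v with p' | l <;> simp [GammaQ]

theorem adj_inr_iff {l : SGam F} {v : SGam F ⊕ SGam F} :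
    (GammaQ F).Adj (Sum.inr l) v ↔ ∃ p, lineAdj l p ∧ Sum.inl p = v := by
  rcases v with p | l' <;> simp [GammaQ]

theorem ncard_neighborSet [Fintype F] (v : SGam F ⊕ SGam F) :
    ((GammaQ F).neighborSet v).ncard = Fintype.card F + 1 := by
  rcases v with p | l
  · have hneighbors : (GammaQ F).neighborSet (Sum.inl p) = Sum.inr '' {l | lineAdj l p} :=
      Set.ext fun _ => adj_inl_iff
    rw [hneighbors, Set.ncard_image_of_injective _ Sum.inr_injective, ncard_setOf_lineAdj_left]
  · have hneighbors : (GammaQ F).neighborSet (Sum.inr l) = Sum.inl '' {p | lineAdj l p} :=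
      Set.ext fun _ => adj_inr_iff
    rw [hneighbors, Set.ncard_image_of_injective _ Sum.inl_injective, ncard_setOf_lineAdj_right]

theorem isBipartite : (GammaQ F).IsBipartite := by
  have sides : (GammaQ F).Coloring Bool :=
    SimpleGraph.Coloring.mk Sum.isLeft (by rintro (_ | _) (_ | _) h <;> simp_all [GammaQ])
  simpa using sides.colorable

variable {s t u v w x : SGam F ⊕ SGam F}

theorem path_two_unique (hst : (GammaQ F).Adj s t) (htu : (GammaQ F).Adj t u)
    (hsv : (GammaQ F).Adj s v) (hvu : (GammaQ F).Adj v u) (hsu : s ≠ u) : t = v := by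
  rcases s with p | l
  · obtain ⟨l, hlp, rfl⟩ := adj_inl_iff.mp hst
    obtain ⟨p', hlp', rfl⟩ := adj_inr_iff.mp htu
    obtain ⟨l', hl'p, rfl⟩ := adj_inl_iff.mp hsv
    have hl'p' : lineAdj l' p' := by simpa [adj_inr_iff] using hvu
    rw [line_eq_of_two_common_points hlp hlp' hl'p hl'p' (by simpa using hsu)]
  · obtain ⟨p, hlp, rfl⟩ := adj_inr_iff.mp hst
    obtain ⟨l', hl'p, rfl⟩ := adj_inl_iff.mp htu
    obtain ⟨p', hlp', rfl⟩ := adj_inr_iff.mp hsv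
    have hl'p' : lineAdj l' p' := by simpa [adj_inl_iff] using hvu
    by_contra hp
    exact hsu (congrArg Sum.inr
      (line_eq_of_two_common_points hlp hlp' hl'p hl'p' (by simpa using hp)))

theorem path_three_unique (hst : (GammaQ F).Adj s t) (htu : (GammaQ F).Adj t u)
    (huv : (GammaQ F).Adj u v) (hsx : (GammaQ F).Adj s x) (hxw : (GammaQ F).Adj x w)
    (hwv : (GammaQ F).Adj w v) (hsv : ¬ (GammaQ F).Adj s v) : t = x := by
  rcases s with p | l
  · obtain ⟨m, hmp, rfl⟩ := adj_inl_iff.mp hst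
    obtain ⟨q, hmq, rfl⟩ := adj_inr_iff.mp htu
    obtain ⟨l, hlq, rfl⟩ := adj_inl_iff.mp huv
    obtain ⟨m', hm'p, rfl⟩ := adj_inl_iff.mp hsx
    obtain ⟨q', hm'q', rfl⟩ := adj_inr_iff.mp hxw
    have hlq' : lineAdj l q' := by simpa [adj_inl_iff] using hwv
    have hlp : ¬ lineAdj l p := by simpa [adj_inl_iff] using hsv
    rw [line_unique_of_not_lineAdj hlp hmp hmq hlq hm'p hm'q' hlq']
  · obtain ⟨q, hlq, rfl⟩ := adj_inr_iff.mp hst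
    obtain ⟨m, hmq, rfl⟩ := adj_inl_iff.mp htu
    obtain ⟨p, hmp, rfl⟩ := adj_inr_iff.mp huv
    obtain ⟨q', hlq', rfl⟩ := adj_inr_iff.mp hsx
    obtain ⟨m', hm'q', rfl⟩ := adj_inl_iff.mp hxw
    have hm'p : lineAdj m' p := by simpa [adj_inr_iff] using hwv
    have hlp : ¬ lineAdj l p := by simpa [adj_inr_iff] using hsv
    obtain rfl : m = m' := line_unique_of_not_lineAdj hlp hmp hmq hlq hm'p hm'q' hlq'
    have hlm : l ≠ m := fun h => hlp (h ▸ hmp)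
    exact path_two_unique hst htu hsx hxw (by simpa using hlm)

theorem eight_le_egirth : 8 ≤ (GammaQ F).egirth :=
  eight_le_egirth_of_isBipartite isBipartite (fun _ _ _ _ => path_two_unique)
    fun _ _ _ _ _ _ => path_three_unique

theorem egirth_le_eight : (GammaQ F).egirth ≤ 8 := by
  have h₁ : (GammaQ F).Adj (pt (some 0) 0 0) (ln (some 0) 0 0) := by simp [GammaQ, pt, ln, lineAdj]
  have h₂ : (GammaQ F).Adj (ln (some 0) 0 0) (pt none 0 0) := by simp [GammaQ, pt, ln, lineAdj]
  have h₃ : (GammaQ F).Adj (pt none 0 0) (lnq (some 0)) := by simp [GammaQ, pt, lnq, lineAdj]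
  have h₄ : (GammaQ F).Adj (lnq (some 0)) (ptq none) := by simp [GammaQ, ptq, lnq, lineAdj]
  have h₅ : (GammaQ F).Adj (ptq none) (lnq none) := by simp [GammaQ, ptq, lnq, lineAdj]
  have h₆ : (GammaQ F).Adj (lnq none) (ptq (some 0)) := by simp [GammaQ, ptq, lnq, lineAdj]
  have h₇ : (GammaQ F).Adj (ptq (some 0)) (ln none 0 0) := by simp [GammaQ, ptq, ln, lineAdj]
  have h₈ : (GammaQ F).Adj (ln none 0 0) (pt (some 0) 0 0) := by simp [GammaQ, pt, ln, lineAdj]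
  let w : (GammaQ F).Walk (pt (some 0) 0 0) (pt (some 0) 0 0) :=
    .cons h₁ <| .cons h₂ <| .cons h₃ <| .cons h₄ <| .cons h₅ <| .cons h₆ <| .cons h₇ <|
      .cons h₈ .nil
  have hw : w.IsCycle := by
    refine (SimpleGraph.Walk.cons_isCycle_iff _ _).mpr ?_
    simp only [SimpleGraph.Walk.cons_isPath_iff, SimpleGraph.Walk.support_cons,
      SimpleGraph.Walk.edges_cons, SimpleGraph.Walk.support_nil, SimpleGraph.Walk.edges_nil]
    simp [pt, ptq, ln, lnq]
  simpa [w] using hw.egirth_le_length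

theorem egirth_eq_eight : (GammaQ F).egirth = 8 :=
  le_antisymm egirth_le_eight eight_le_egirth

end Graph

theorem card_vertices {F : Type*} [Fintype F] : Fintype.card (SGam F ⊕ SGam F) =
    2 * Fintype.card F ^ 3 + 2 * Fintype.card F ^ 2 + 2 * Fintype.card F + 2 := by
  simp only [Fintype.card_sum, Fintype.card_prod, Fintype.card_option]
  ring

end GammaQ

/-- `Γ_q` is a `(q+1)`-regular bipartite graph of girth 8 on `2q³+2q²+2q+2`
vertices; hence it is a `(q+1,8)`-cage (its order meets the Moore bound). -/
theorem stmt12 {F : Type*} [Field F] [Fintype F] [DecidableEq F] :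
    (∀ v : SGam F ⊕ SGam F,
        ((GammaQ F).neighborSet v).ncard = Fintype.card F + 1) ∧
    (GammaQ F).egirth = 8 ∧
    Fintype.card (SGam F ⊕ SGam F) =
      2 * Fintype.card F ^ 3 + 2 * Fintype.card F ^ 2 + 2 * Fintype.card F + 2 :=
  ⟨GammaQ.ncard_neighborSet, GammaQ.egirth_eq_eight, GammaQ.card_vertices⟩
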